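/- Suppose 3/2 < α < 2. Then for every x > 0, the function (s,t) ↦ (st)^{α−2β} (∂_s∂_t R(s,t))², defined off the diagonal {s = t}, is Lebesgue integrable on (0,x)²; that is, ∫_0^x ∫_0^x (st)^{α−2β} (∂_s∂_t R(s,t))² ds dt < ∞. -/

import Mathlib

open MeasureTheory ProbabilityTheory Filter

noncomputable section

/-- Hypotheses (H.1) and (H.2) on the pair `(φ, ψ)`, together with the
parameter constraints `β ∈ (0,1)`, `λ > 0`, `α ∈ (0, 2β]`, `ν ∈ (1,2]`. -/
def SelfSimilarHyp (β lam α ν : ℝ) (φ ψ : ℝ → ℝ) : Prop :=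
  β ∈ Set.Ioo (0 : ℝ) 1 ∧ 0 < lam ∧ α ∈ Set.Ioc (0 : ℝ) (2 * β) ∧
  ν ∈ Set.Ioc (1 : ℝ) 2 ∧
  -- (H.1): φ(y) = −λ(y−1)^α + ψ(y) on [1,∞)
  (∀ y : ℝ, 1 ≤ y → φ y = -lam * (y - 1) ^ α + ψ y) ∧
  -- ψ is twice differentiable on an open set containing [1,∞)
  (∃ S : Set ℝ, IsOpen S ∧ Set.Ici (1 : ℝ) ⊆ S ∧
    ∀ y ∈ S, DifferentiableAt ℝ ψ y ∧ DifferentiableAt ℝ (deriv ψ) y) ∧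
  -- bounds (a), (b) on ψ', ψ''
  (∃ C₀ : ℝ, 0 ≤ C₀ ∧
    (∀ y : ℝ, 1 < y → |deriv ψ y| ≤ C₀ * y ^ (α - 1)) ∧
    (∀ y : ℝ, 1 < y → |deriv (deriv ψ) y| ≤ C₀ * y⁻¹ * (y - 1) ^ (α - 1))) ∧
  -- (c): ψ'(1) = βψ(1) when α ≥ 1
  (1 ≤ α → deriv ψ 1 = β * ψ 1) ∧
  -- (H.2): bounds (d), (e) on φ', φ'' for y ≥ 2
  (∃ C₁ : ℝ, 0 < C₁ ∧ ∀ y : ℝ, 2 ≤ y →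
    ((α < 1 → |deriv φ y| ≤ C₁ * (y - 1) ^ (-ν) ∧
        |deriv (deriv φ) y| ≤ C₁ * (y - 1) ^ (-ν - 1)) ∧
     (1 ≤ α → |deriv φ y| ≤ C₁ * (y - 1) ^ (α - 2) ∧
        |deriv (deriv φ) y| ≤ C₁ * (y - 1) ^ (α - 3))))

/-- The covariance function `R(s,t) = (s∧t)^{2β} φ((s∨t)/(s∧t))` for `s,t > 0`,
and `R(s,t) = 0` if `s = 0` or `t = 0`. -/
def covR (β : ℝ) (φ : ℝ → ℝ) (s t : ℝ) : ℝ :=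
  if s = 0 ∨ t = 0 then 0 else (min s t) ^ (2 * β) * φ (max s t / min s t)

/-- `Δ(k,l) = R(k+1,l+1) − R(k,l+1) − R(k+1,l) + R(k,l)`. -/
def covΔ (β : ℝ) (φ : ℝ → ℝ) (k l : ℕ) : ℝ :=
  covR β φ (k + 1) (l + 1) - covR β φ k (l + 1) - covR β φ (k + 1) l + covR β φ k l

/-- `δ_{kl} = Δ(k,l)/√(Δ(k,k)Δ(l,l))`. -/
def covδ (β : ℝ) (φ : ℝ → ℝ) (k l : ℕ) : ℝ :=
  covΔ β φ k l / Real.sqrt (covΔ β φ k k * covΔ β φ l l)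

/-- For `m ∈ ℤ`, `a_α(m) = (1/2)(|m+1|^α + |m−1|^α − 2|m|^α)`. -/
def aFun (α : ℝ) (m : ℤ) : ℝ :=
  (|(m : ℝ) + 1| ^ α + |(m : ℝ) - 1| ^ α - 2 * |(m : ℝ)| ^ α) / 2

/-- The mixed partial derivative `∂_s ∂_t R(s,t)` (first in `t`, then in `s`),
where `R` is the covariance function `covR`. -/
def mixedPartialR (β : ℝ) (φ : ℝ → ℝ) (s t : ℝ) : ℝ :=
  deriv (fun u : ℝ => deriv (fun v : ℝ => covR β φ u v) t) s

/-!
For `m = min s t`, `M = max s t` and `y = M / m`, the covariance is `R = m ^ (2β) φ(y)`, so off the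
diagonal its mixed partial is again homogeneous: it equals `m ^ (2β - 2) G(y)` with
`G(y) = (2β - 1) φ'(y) - y φ''(y)`. Condition (H.1) for `y ≤ 2` and (H.2) for `y ≥ 2` both give
`|G(y)| ≤ C (y - 1) ^ (α - 2)`, whence `|∂ₛ∂ₜR| ≤ C m ^ (2β - α) (M - m) ^ (α - 2)`. As `α ≤ 2β`,
the weight satisfies `(st) ^ (α - 2β) ≤ m ^ (2 (α - 2β))`, which cancels the square of the power of
`m`. The integrand is therefore at most `C² |s - t| ^ (2α - 4)`, which is integrable on bounded sets
because `2α - 4 > -1`.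
-/

open scoped Pointwise

section ProductIntegrability

theorem ae_prod_fst_ne_snd {X : Type*} [MeasurableSpace X] [MeasurableEq X]
    (μ ν : Measure X) [SFinite ν] [NullSingletonClass ν] : ∀ᵐ p ∂μ.prod ν, p.1 ≠ p.2 := by
  refine (Measure.ae_prod_iff_ae_ae measurableSet_diagonal.compl).2 (ae_of_all _ fun a => ?_)
  filter_upwards [Measure.ae_ne ν a] with b hb using hb.symm

theorem integrableOn_prod_comp_sub {G E : Type*} [AddGroup G] [MeasurableSpace G]
    [MeasurableAdd₂ G] [MeasurableNeg G] [NormedAddCommGroup E] {μ ν : Measure G}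
    [SFinite μ] [SFinite ν] [μ.IsAddRightInvariant] {f : G → E} {A B : Set G}
    (hf : IntegrableOn f (A - B) μ) (hB : ν B ≠ ⊤) :
    IntegrableOn (fun p : G × G => f (p.1 - p.2)) (A ×ˢ B) (μ.prod ν) := by
  have : IsFiniteMeasure (ν.restrict B) := isFiniteMeasure_restrict.2 hB
  have hfst : IntegrableOn (fun p : G × G => f p.1) ((A - B) ×ˢ B) (μ.prod ν) := by
    rw [IntegrableOn, ← Measure.prod_restrict]
    exact hf.comp_fst _
  have hshear : MeasurableEmbedding fun p : G × G => (p.1 - p.2, p.2) :=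
    (MeasurableEquiv.prodComm.trans
      ((MeasurableEquiv.shearSubRight G).trans MeasurableEquiv.prodComm)).measurableEmbedding
  refine (((measurePreserving_sub_prod μ ν).integrableOn_comp_preimage hshear).2 hfst).mono_set ?_
  exact fun p hp => ⟨Set.sub_mem_sub hp.1 hp.2, hp.2⟩

theorem integrableOn_prod_norm_sub_rpow {E : Type*} [NormedAddCommGroup E] [NormedSpace ℝ E]
    [FiniteDimensional ℝ E] [MeasurableSpace E] [BorelSpace E] {μ : Measure E}
    [μ.IsAddHaarMeasure] {A B : Set E} {γ : ℝ} (hE : 1 ≤ Module.finrank ℝ E)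
    (hγ : -(Module.finrank ℝ E : ℝ) < γ) (hA : Bornology.IsBounded A)
    (hB : Bornology.IsBounded B) :
    IntegrableOn (fun p : E × E => ‖p.1 - p.2‖ ^ γ) (A ×ˢ B) (μ.prod μ) := by
  have hloc : LocallyIntegrable (fun u : E => ‖u‖ ^ γ) μ :=
    locallyIntegrable_of_norm_le_rpow (C := 1) (α := -γ) hE (by linarith)
      (ae_of_all _ fun u => by simp [Real.abs_rpow_of_nonneg (norm_nonneg u)])
      (measurable_norm.pow_const γ).aestronglyMeasurable
  refine integrableOn_prod_comp_sub (f := fun u => ‖u‖ ^ γ) ?_ hB.measure_lt_top.ne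
  exact (hloc.integrableOn_isCompact (hA.sub hB).isCompact_closure).mono_set subset_closure

end ProductIntegrability

section HomogeneousFunctions

/-- The function on `{(m, M) | 0 < m, 0 < M}` that is homogeneous of degree `p` and has the profile
`g` in the ratio `M / m`. Both `R` and `∂ₛ∂ₜR` have this form in `m = min s t` and `M = max s t`. -/
def homogeneousOfProfile (p : ℝ) (g : ℝ → ℝ) (m M : ℝ) : ℝ :=
  m ^ p * g (M / m)

variable {p γ C g' m M : ℝ} {g : ℝ → ℝ}

theorem measurable_homogeneousOfProfile {X : Type*} [MeasurableSpace X] {a b : X → ℝ}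
    (hg : Measurable g) (ha : Measurable a) (hb : Measurable b) :
    Measurable fun z => homogeneousOfProfile p g (a z) (b z) :=
  (ha.pow_const p).mul (hg.comp (hb.div ha))

theorem hasDerivAt_homogeneousOfProfile_right (hg : HasDerivAt g g' (M / m)) (hm : 0 < m) :
    HasDerivAt (homogeneousOfProfile p g m) (m ^ (p - 1) * g') M := by
  refine ((hg.comp M ((hasDerivAt_id M).div_const m)).const_mul (m ^ p)).congr_deriv ?_
  rw [Real.rpow_sub_one hm.ne']
  ring

theorem hasDerivAt_homogeneousOfProfile_left (hg : HasDerivAt g g' (M / m)) (hm : 0 < m) :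
    HasDerivAt (fun u => homogeneousOfProfile p g u M)
      (m ^ (p - 1) * (p * g (M / m) - M / m * g')) m := by
  refine ((Real.hasDerivAt_rpow_const (p := p) (.inl hm.ne')).mul
    (hg.comp m ((hasDerivAt_const m M).div (hasDerivAt_id m) hm.ne'))).congr_deriv ?_
  simp only [Function.comp_apply, Real.rpow_sub_one hm.ne']
  field_simp
  ring

theorem abs_homogeneousOfProfile_le (hg : ∀ y, 1 < y → |g y| ≤ C * (y - 1) ^ γ) (hm : 0 < m)
    (hmM : m < M) :
    |homogeneousOfProfile p g m M| ≤ C * (m ^ (p - γ) * (M - m) ^ γ) := by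
  have hratio : M / m - 1 = (M - m) / m := by field_simp
  calc |homogeneousOfProfile p g m M| = m ^ p * |g (M / m)| := by
        rw [homogeneousOfProfile, abs_mul, abs_of_pos (Real.rpow_pos_of_pos hm p)]
    _ ≤ m ^ p * (C * ((M - m) / m) ^ γ) := by
        gcongr
        exact hratio ▸ hg _ ((one_lt_div hm).2 hmM)
    _ = C * (m ^ (p - γ) * (M - m) ^ γ) := by
        rw [Real.div_rpow (sub_pos.2 hmM).le hm.le, Real.rpow_sub hm]
        ring

theorem mul_rpow_neg_mul_rpow_sq_le_one {δ : ℝ} (hδ : 0 ≤ δ) (hm : 0 < m) (hmM : m ≤ M) :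
    (m * M) ^ (-δ) * (m ^ δ) ^ 2 ≤ 1 := by
  have hM : 0 < M := hm.trans_le hmM
  calc (m * M) ^ (-δ) * (m ^ δ) ^ 2 = (m * M) ^ (-δ) * (m * m) ^ δ := by
        rw [Real.mul_rpow hm.le hm.le, sq]
    _ ≤ (m * M) ^ (-δ) * (m * M) ^ δ := by gcongr
    _ = 1 := by rw [← Real.rpow_add (mul_pos hm hM), neg_add_cancel, Real.rpow_zero]

theorem rpow_mul_homogeneousOfProfile_sq_le {δ : ℝ}
    (hg : ∀ y, 1 < y → |g y| ≤ C * (y - 1) ^ γ) (hδ : 0 ≤ δ) (hm : 0 < m) (hmM : m < M) :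
    (m * M) ^ (-δ) * homogeneousOfProfile (γ + δ) g m M ^ 2 ≤ C ^ 2 * (M - m) ^ (2 * γ) := by
  have hM : 0 < M := hm.trans hmM
  have hbound := abs_homogeneousOfProfile_le (p := γ + δ) hg hm hmM
  rw [add_sub_cancel_left] at hbound
  calc (m * M) ^ (-δ) * homogeneousOfProfile (γ + δ) g m M ^ 2
      ≤ (m * M) ^ (-δ) * (C * (m ^ δ * (M - m) ^ γ)) ^ 2 := by
        rw [← sq_abs (homogeneousOfProfile _ _ _ _)]
        gcongr
    _ = (m * M) ^ (-δ) * (m ^ δ) ^ 2 * (C ^ 2 * (M - m) ^ (2 * γ)) := by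
        rw [two_mul, Real.rpow_add (sub_pos.2 hmM)]
        ring
    _ ≤ C ^ 2 * (M - m) ^ (2 * γ) :=
        mul_le_of_le_one_left (mul_nonneg (sq_nonneg C) (Real.rpow_nonneg (sub_pos.2 hmM).le _))
          (mul_rpow_neg_mul_rpow_sq_le_one hδ hm hmM.le)

end HomogeneousFunctions

section MixedPartial

/-- The profile of `∂ₛ∂ₜR`, which is homogeneous of degree `2β - 2` off the diagonal. -/
def mixedPartialProfile (β : ℝ) (φ : ℝ → ℝ) (y : ℝ) : ℝ :=
  (2 * β - 1) * deriv φ y - y * deriv (deriv φ) y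

variable {α β C₁ C₂ s t : ℝ} {φ : ℝ → ℝ}

theorem measurable_mixedPartialProfile (β : ℝ) (φ : ℝ → ℝ) :
    Measurable (mixedPartialProfile β φ) :=
  ((measurable_deriv φ).const_mul _).sub (measurable_id.mul (measurable_deriv _))

theorem abs_mixedPartialProfile_le {y γ : ℝ} (hy : 0 ≤ y) (h₁ : |deriv φ y| ≤ C₁ * (y - 1) ^ γ)
    (h₂ : y * |deriv (deriv φ) y| ≤ C₂ * (y - 1) ^ γ) :
    |mixedPartialProfile β φ y| ≤ (|2 * β - 1| * C₁ + C₂) * (y - 1) ^ γ :=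
  calc |mixedPartialProfile β φ y|
      ≤ |2 * β - 1| * |deriv φ y| + y * |deriv (deriv φ) y| := by
        rw [mixedPartialProfile]
        grw [abs_sub]
        rw [abs_mul, abs_mul, abs_of_nonneg hy]
    _ ≤ |2 * β - 1| * (C₁ * (y - 1) ^ γ) + C₂ * (y - 1) ^ γ := by gcongr
    _ = (|2 * β - 1| * C₁ + C₂) * (y - 1) ^ γ := by ring

theorem covR_eq_homogeneousOfProfile (hs : s ≠ 0) (ht : t ≠ 0) :
    covR β φ s t = homogeneousOfProfile (2 * β) φ (min s t) (max s t) :=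
  if_neg (not_or.2 ⟨hs, ht⟩)

theorem deriv_covR_of_lt (hφ : DifferentiableOn ℝ φ (Set.Ioi 1)) (hs : 0 < s) (hst : s < t) :
    deriv (covR β φ s) t = homogeneousOfProfile (2 * β - 1) (deriv φ) s t := by
  have hcov : covR β φ s =ᶠ[nhds t] homogeneousOfProfile (2 * β) φ s := by
    filter_upwards [lt_mem_nhds hst] with v hv
    rw [covR_eq_homogeneousOfProfile hs.ne' (hs.trans hv).ne', min_eq_left hv.le,
      max_eq_right hv.le]
  have hd := (hφ.differentiableAt (Ioi_mem_nhds ((one_lt_div hs).2 hst))).hasDerivAt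
  exact hcov.deriv_eq.trans (hasDerivAt_homogeneousOfProfile_right hd hs).deriv

theorem deriv_covR_of_gt (hφ : DifferentiableOn ℝ φ (Set.Ioi 1)) (ht : 0 < t) (hts : t < s) :
    deriv (covR β φ s) t =
      homogeneousOfProfile (2 * β - 1) (fun y => 2 * β * φ y - y * deriv φ y) t s := by
  have hcov : covR β φ s =ᶠ[nhds t] fun v => homogeneousOfProfile (2 * β) φ v s := by
    filter_upwards [lt_mem_nhds ht, gt_mem_nhds hts] with v hv₀ hv
    rw [covR_eq_homogeneousOfProfile (ht.trans hts).ne' hv₀.ne', min_eq_right hv.le,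
      max_eq_left hv.le]
  have hd := (hφ.differentiableAt (Ioi_mem_nhds ((one_lt_div ht).2 hts))).hasDerivAt
  exact hcov.deriv_eq.trans (hasDerivAt_homogeneousOfProfile_left hd ht).deriv

theorem mixedPartialR_of_lt (hφ : DifferentiableOn ℝ φ (Set.Ioi 1))
    (hφ' : DifferentiableOn ℝ (deriv φ) (Set.Ioi 1)) (hs : 0 < s) (hst : s < t) :
    mixedPartialR β φ s t = homogeneousOfProfile (2 * β - 2) (mixedPartialProfile β φ) s t := by
  have hderiv : (fun u => deriv (covR β φ u) t) =ᶠ[nhds s]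
      fun u => homogeneousOfProfile (2 * β - 1) (deriv φ) u t := by
    filter_upwards [lt_mem_nhds hs, gt_mem_nhds hst] with u hu hut
    exact deriv_covR_of_lt hφ hu hut
  have hd := (hφ'.differentiableAt (Ioi_mem_nhds ((one_lt_div hs).2 hst))).hasDerivAt
  rw [mixedPartialR, hderiv.deriv_eq, (hasDerivAt_homogeneousOfProfile_left hd hs).deriv,
    sub_sub, one_add_one_eq_two, homogeneousOfProfile, mixedPartialProfile]

theorem mixedPartialR_of_gt (hφ : DifferentiableOn ℝ φ (Set.Ioi 1))
    (hφ' : DifferentiableOn ℝ (deriv φ) (Set.Ioi 1)) (ht : 0 < t) (hts : t < s) :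
    mixedPartialR β φ s t = homogeneousOfProfile (2 * β - 2) (mixedPartialProfile β φ) t s := by
  have hderiv : (fun u => deriv (covR β φ u) t) =ᶠ[nhds s]
      homogeneousOfProfile (2 * β - 1) (fun y => 2 * β * φ y - y * deriv φ y) t := by
    filter_upwards [lt_mem_nhds hts] with u hu
    exact deriv_covR_of_gt hφ ht hu
  have hy : Set.Ioi 1 ∈ nhds (s / t) := Ioi_mem_nhds ((one_lt_div ht).2 hts)
  have hprofile : HasDerivAt (fun y => 2 * β * φ y - y * deriv φ y)
      (mixedPartialProfile β φ (s / t)) (s / t) := by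
    refine (((hφ.differentiableAt hy).hasDerivAt.const_mul (2 * β)).sub
      ((hasDerivAt_id (s / t)).mul (hφ'.differentiableAt hy).hasDerivAt)).congr_deriv ?_
    simp only [mixedPartialProfile, id_eq]
    ring
  rw [mixedPartialR, hderiv.deriv_eq, (hasDerivAt_homogeneousOfProfile_right hprofile ht).deriv,
    sub_sub, one_add_one_eq_two, homogeneousOfProfile]

theorem mixedPartialR_eq_homogeneousOfProfile (hφ : DifferentiableOn ℝ φ (Set.Ioi 1))
    (hφ' : DifferentiableOn ℝ (deriv φ) (Set.Ioi 1)) (hs : 0 < s) (ht : 0 < t) (hst : s ≠ t) :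
    mixedPartialR β φ s t =
      homogeneousOfProfile (2 * β - 2) (mixedPartialProfile β φ) (min s t) (max s t) := by
  rcases hst.lt_or_gt with h | h
  · rw [min_eq_left h.le, max_eq_right h.le, mixedPartialR_of_lt hφ hφ' hs h]
  · rw [min_eq_right h.le, max_eq_left h.le, mixedPartialR_of_gt hφ hφ' ht h]

theorem rpow_mul_mixedPartialR_sq_le (hφ : DifferentiableOn ℝ φ (Set.Ioi 1))
    (hφ' : DifferentiableOn ℝ (deriv φ) (Set.Ioi 1)) (hα : α ≤ 2 * β)
    (h₁ : ∀ y, 1 < y → |deriv φ y| ≤ C₁ * (y - 1) ^ (α - 2))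
    (h₂ : ∀ y, 1 < y → y * |deriv (deriv φ) y| ≤ C₂ * (y - 1) ^ (α - 2))
    (hs : 0 < s) (ht : 0 < t) (hst : s ≠ t) :
    (s * t) ^ (α - 2 * β) * mixedPartialR β φ s t ^ 2
      ≤ (|2 * β - 1| * C₁ + C₂) ^ 2 * ‖s - t‖ ^ (2 * (α - 2)) := by
  have hprofile : ∀ y, 1 < y →
      |mixedPartialProfile β φ y| ≤ (|2 * β - 1| * C₁ + C₂) * (y - 1) ^ (α - 2) :=
    fun y hy => abs_mixedPartialProfile_le (by linarith) (h₁ y hy) (h₂ y hy)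
  have hbound := rpow_mul_homogeneousOfProfile_sq_le hprofile (sub_nonneg.2 hα) (lt_min hs ht)
    (min_lt_max.2 hst)
  have hdegree : α - 2 + (2 * β - α) = 2 * β - 2 := by ring
  rwa [min_mul_max, neg_sub, max_sub_min_eq_abs', ← Real.norm_eq_abs (s - t), hdegree,
    ← mixedPartialR_eq_homogeneousOfProfile hφ hφ' hs ht hst] at hbound

theorem aestronglyMeasurable_rpow_mul_mixedPartialR_sq (hφ : DifferentiableOn ℝ φ (Set.Ioi 1))
    (hφ' : DifferentiableOn ℝ (deriv φ) (Set.Ioi 1)) (γ : ℝ) :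
    AEStronglyMeasurable (fun p : ℝ × ℝ => (p.1 * p.2) ^ γ * mixedPartialR β φ p.1 p.2 ^ 2)
      (volume.restrict (Set.Ioi 0 ×ˢ Set.Ioi 0)) := by
  have hmeas : Measurable fun p : ℝ × ℝ => (p.1 * p.2) ^ γ * homogeneousOfProfile (2 * β - 2)
      (mixedPartialProfile β φ) (min p.1 p.2) (max p.1 p.2) ^ 2 :=
    ((measurable_fst.mul measurable_snd).pow_const γ).mul
      ((measurable_homogeneousOfProfile (measurable_mixedPartialProfile β φ)
        (measurable_fst.min measurable_snd) (measurable_fst.max measurable_snd)).pow_const 2)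
  refine hmeas.aestronglyMeasurable.congr ?_
  filter_upwards [ae_restrict_mem (measurableSet_Ioi.prod measurableSet_Ioi),
    ae_restrict_of_ae (ae_prod_fst_ne_snd volume volume)] with p hp hne
  rw [mixedPartialR_eq_homogeneousOfProfile hφ hφ' hp.1 hp.2 hne]

end MixedPartial

theorem hasDerivAt_const_mul_sub_rpow {a y : ℝ} (c p : ℝ) (hy : a < y) :
    HasDerivAt (fun w => c * (w - a) ^ p) (c * p * (y - a) ^ (p - 1)) y := by
  refine ((((hasDerivAt_id y).sub_const a).rpow_const (p := p)
    (.inl (sub_pos.2 hy).ne')).const_mul c).congr_deriv ?_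
  simp only [id_eq]
  ring

theorem exists_forall_lt_le_mul {X : Type*} [LinearOrder X] {a b : X} {f w : X → ℝ}
    (hw : ∀ y, a < y → 0 ≤ w y) (hnear : ∃ C, ∀ y, a < y → y ≤ b → f y ≤ C * w y)
    (hfar : ∃ C, ∀ y, b ≤ y → f y ≤ C * w y) : ∃ C, ∀ y, a < y → f y ≤ C * w y := by
  obtain ⟨A, hA⟩ := hnear
  obtain ⟨B, hB⟩ := hfar
  refine ⟨max A B, fun y hy => ?_⟩
  have hwy := hw y hy
  rcases le_total y b with hyb | hby
  · grw [hA y hy hyb, ← le_max_left]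
  · grw [hB y hby, ← le_max_right]

namespace SelfSimilarHyp

variable {β lam α ν y : ℝ} {φ ψ : ℝ → ℝ}

theorem hasDerivAt (hyp : SelfSimilarHyp β lam α ν φ ψ) (hy : 1 < y) :
    HasDerivAt φ (-lam * α * (y - 1) ^ (α - 1) + deriv ψ y) y := by
  obtain ⟨-, -, -, -, hφ, ⟨S, -, hS, hψ⟩, -⟩ := hyp
  refine ((hasDerivAt_const_mul_sub_rpow (-lam) α hy).add
    (hψ y (hS hy.le)).1.hasDerivAt).congr_of_eventuallyEq ?_
  filter_upwards [lt_mem_nhds hy] with w hw using hφ w hw.le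

theorem hasDerivAt_deriv (hyp : SelfSimilarHyp β lam α ν φ ψ) (hy : 1 < y) :
    HasDerivAt (deriv φ)
      (-lam * α * (α - 1) * (y - 1) ^ (α - 2) + deriv (deriv ψ) y) y := by
  have hderiv : deriv φ =ᶠ[nhds y] fun w => -lam * α * (w - 1) ^ (α - 1) + deriv ψ w := by
    filter_upwards [lt_mem_nhds hy] with w hw using (hyp.hasDerivAt hw).deriv
  obtain ⟨-, -, -, -, -, ⟨S, -, hS, hψ⟩, -⟩ := hyp
  have hrpow := hasDerivAt_const_mul_sub_rpow (-lam * α) (α - 1) hy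
  rw [sub_sub, one_add_one_eq_two] at hrpow
  exact (hrpow.add (hψ y (hS hy.le)).2.hasDerivAt).congr_of_eventuallyEq hderiv

theorem differentiableOn (hyp : SelfSimilarHyp β lam α ν φ ψ) :
    DifferentiableOn ℝ φ (Set.Ioi 1) :=
  fun _ hy => (hyp.hasDerivAt hy).differentiableAt.differentiableWithinAt

theorem differentiableOn_deriv (hyp : SelfSimilarHyp β lam α ν φ ψ) :
    DifferentiableOn ℝ (deriv φ) (Set.Ioi 1) :=
  fun _ hy => (hyp.hasDerivAt_deriv hy).differentiableAt.differentiableWithinAt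

theorem le_two_mul (hyp : SelfSimilarHyp β lam α ν φ ψ) : α ≤ 2 * β :=
  hyp.2.2.1.2

theorem lt_two (hyp : SelfSimilarHyp β lam α ν φ ψ) : α < 2 := by
  linarith [hyp.1.2, hyp.le_two_mul]

theorem exists_abs_deriv_le_of_le_two (hyp : SelfSimilarHyp β lam α ν φ ψ) (hα : 1 ≤ α) :
    ∃ C, ∀ y, 1 < y → y ≤ 2 → |deriv φ y| ≤ C * (y - 1) ^ (α - 2) := by
  have hα₂ := hyp.lt_two
  have hφ' := fun y (hy : 1 < y) => (hyp.hasDerivAt hy).deriv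
  obtain ⟨-, hlam, -, -, -, -, ⟨C₀, hC₀, hψ', -⟩, -⟩ := hyp
  refine ⟨lam * α + C₀ * 2, fun y hy hy₂ => ?_⟩
  have hy₁ : 0 < y - 1 := sub_pos.2 hy
  have hone : 1 ≤ (y - 1) ^ (α - 2) :=
    Real.one_le_rpow_of_pos_of_le_one_of_nonpos hy₁ (by linarith) (by linarith)
  have hsub : (y - 1) ^ (α - 1) ≤ 1 := Real.rpow_le_one hy₁.le (by linarith) (by linarith)
  have hpow : y ^ (α - 1) ≤ 2 := (Real.rpow_le_self_of_one_le hy.le (by linarith)).trans hy₂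
  calc |deriv φ y| ≤ |-lam * α * (y - 1) ^ (α - 1)| + |deriv ψ y| := by
        rw [hφ' y hy]
        exact abs_add_le _ _
    _ = lam * α * (y - 1) ^ (α - 1) + |deriv ψ y| := by
        rw [neg_mul, neg_mul, abs_neg, abs_of_nonneg (by positivity)]
    _ ≤ lam * α * 1 + C₀ * 2 := by grw [hsub, hψ' y hy, hpow]
    _ = (lam * α + C₀ * 2) * 1 := by ring
    _ ≤ (lam * α + C₀ * 2) * (y - 1) ^ (α - 2) := by gcongr

theorem exists_abs_deriv_le (hyp : SelfSimilarHyp β lam α ν φ ψ) (hα : 1 ≤ α) :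
    ∃ C, ∀ y, 1 < y → |deriv φ y| ≤ C * (y - 1) ^ (α - 2) := by
  refine exists_forall_lt_le_mul (fun y hy => Real.rpow_nonneg (sub_pos.2 hy).le _)
    (hyp.exists_abs_deriv_le_of_le_two hα) ?_
  obtain ⟨-, -, -, -, -, -, -, -, ⟨C₁, -, hfar⟩⟩ := hyp
  exact ⟨C₁, fun y hy => ((hfar y hy).2 hα).1⟩

theorem exists_mul_abs_deriv_deriv_le_of_le_two (hyp : SelfSimilarHyp β lam α ν φ ψ)
    (hα : 1 ≤ α) :
    ∃ C, ∀ y, 1 < y → y ≤ 2 → y * |deriv (deriv φ) y| ≤ C * (y - 1) ^ (α - 2) := by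
  have hα₁ : 0 ≤ α - 1 := sub_nonneg.2 hα
  have hα₂ := hyp.lt_two
  have hφ'' := fun y (hy : 1 < y) => (hyp.hasDerivAt_deriv hy).deriv
  obtain ⟨-, hlam, -, -, -, -, ⟨C₀, hC₀, -, hψ''⟩, -⟩ := hyp
  refine ⟨2 * (lam * α * (α - 1) + C₀), fun y hy hy₂ => ?_⟩
  have hy₁ : 0 < y - 1 := sub_pos.2 hy
  have hone : 1 ≤ (y - 1) ^ (α - 2) :=
    Real.one_le_rpow_of_pos_of_le_one_of_nonpos hy₁ (by linarith) (by linarith)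
  have hsub : (y - 1) ^ (α - 1) ≤ 1 := Real.rpow_le_one hy₁.le (by linarith) hα₁
  have hψ''_le : |deriv (deriv ψ) y| ≤ C₀ * 1 := by
    grw [hψ'' y hy, hsub, inv_le_one_of_one_le₀ hy.le, mul_one]
  calc y * |deriv (deriv φ) y|
      ≤ 2 * (|-lam * α * (α - 1) * (y - 1) ^ (α - 2)| + |deriv (deriv ψ) y|) := by
        rw [hφ'' y hy]
        gcongr
        exact abs_add_le _ _
    _ = 2 * (lam * α * (α - 1) * (y - 1) ^ (α - 2) + |deriv (deriv ψ) y|) := by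
        rw [neg_mul, neg_mul, neg_mul, abs_neg, abs_of_nonneg (by positivity)]
    _ ≤ 2 * (lam * α * (α - 1) * (y - 1) ^ (α - 2) + C₀ * (y - 1) ^ (α - 2)) := by
        gcongr
        exact hψ''_le.trans (by gcongr)
    _ = 2 * (lam * α * (α - 1) + C₀) * (y - 1) ^ (α - 2) := by ring

theorem exists_mul_abs_deriv_deriv_le (hyp : SelfSimilarHyp β lam α ν φ ψ) (hα : 1 ≤ α) :
    ∃ C, ∀ y, 1 < y → y * |deriv (deriv φ) y| ≤ C * (y - 1) ^ (α - 2) := by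
  refine exists_forall_lt_le_mul (fun y hy => Real.rpow_nonneg (sub_pos.2 hy).le _)
    (hyp.exists_mul_abs_deriv_deriv_le_of_le_two hα) ?_
  obtain ⟨-, -, -, -, -, -, -, -, ⟨C₁, -, hfar⟩⟩ := hyp
  refine ⟨2 * C₁, fun y hy => ?_⟩
  have hy₁ : 0 < y - 1 := by linarith
  calc y * |deriv (deriv φ) y| ≤ 2 * (y - 1) * (C₁ * (y - 1) ^ (α - 3)) := by
        gcongr
        · linarith
        · exact ((hfar y hy).2 hα).2
    _ = 2 * C₁ * (y - 1) ^ (α - 3 + 1) := by rw [Real.rpow_add_one hy₁.ne']; ring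
    _ = 2 * C₁ * (y - 1) ^ (α - 2) := by ring_nf

end SelfSimilarHyp

theorem mixedPartial_sq_integrable_general (β α C₁ C₂ : ℝ) (φ : ℝ → ℝ)
    (hφ : DifferentiableOn ℝ φ (Set.Ioi 1)) (hφ' : DifferentiableOn ℝ (deriv φ) (Set.Ioi 1))
    (h₁ : ∀ y, 1 < y → |deriv φ y| ≤ C₁ * (y - 1) ^ (α - 2))
    (h₂ : ∀ y, 1 < y → y * |deriv (deriv φ) y| ≤ C₂ * (y - 1) ^ (α - 2))
    (hα : 3 / 2 < α) (hαβ : α ≤ 2 * β) (x : ℝ) :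
    IntegrableOn (fun p : ℝ × ℝ => (p.1 * p.2) ^ (α - 2 * β) * mixedPartialR β φ p.1 p.2 ^ 2)
      (Set.Ioo 0 x ×ˢ Set.Ioo 0 x) volume := by
  have hdom : IntegrableOn (fun p : ℝ × ℝ => ‖p.1 - p.2‖ ^ (2 * (α - 2)))
      (Set.Ioo 0 x ×ˢ Set.Ioo 0 x) volume :=
    integrableOn_prod_norm_sub_rpow (by simp)
      (by rw [Module.finrank_self, Nat.cast_one]; linarith)
      (Metric.isBounded_Ioo 0 x) (Metric.isBounded_Ioo 0 x)
  have hsub : Set.Ioo 0 x ×ˢ Set.Ioo 0 x ⊆ Set.Ioi (0 : ℝ) ×ˢ Set.Ioi (0 : ℝ) :=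
    Set.prod_mono Set.Ioo_subset_Ioi_self Set.Ioo_subset_Ioi_self
  refine (hdom.const_mul ((|2 * β - 1| * C₁ + C₂) ^ 2)).mono'
    ((aestronglyMeasurable_rpow_mul_mixedPartialR_sq hφ hφ' _).mono_set hsub) ?_
  filter_upwards [ae_restrict_mem (measurableSet_Ioo.prod measurableSet_Ioo),
    ae_restrict_of_ae (ae_prod_fst_ne_snd volume volume)] with p hp hne
  obtain ⟨hs, ht⟩ : 0 < p.1 ∧ 0 < p.2 := hsub hp
  rw [Real.norm_of_nonneg (by positivity)]
  exact rpow_mul_mixedPartialR_sq_le hφ hφ' hαβ h₁ h₂ hs ht hne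

/-- for `3/2 < α < 2` and every `x > 0`, the function
`(s,t) ↦ (st)^{α−2β} (∂_s∂_t R(s,t))²` is Lebesgue integrable on `(0,x)²`. -/
theorem mixedPartial_sq_integrable (β lam α ν : ℝ) (φ ψ : ℝ → ℝ)
    (hyp : SelfSimilarHyp β lam α ν φ ψ)
    (hα1 : 3 / 2 < α) (hα2 : α < 2) (x : ℝ) (hx : 0 < x) :
    MeasureTheory.IntegrableOn
      (fun p : ℝ × ℝ => (p.1 * p.2) ^ (α - 2 * β) * mixedPartialR β φ p.1 p.2 ^ 2)
      (Set.Ioo 0 x ×ˢ Set.Ioo 0 x) MeasureTheory.volume := by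
  obtain ⟨C₁, h₁⟩ := hyp.exists_abs_deriv_le (by linarith)
  obtain ⟨C₂, h₂⟩ := hyp.exists_mul_abs_deriv_deriv_le (by linarith)
  exact mixedPartial_sq_integrable_general β α C₁ C₂ φ hyp.differentiableOn
    hyp.differentiableOn_deriv h₁ h₂ hα1 hyp.le_two_mul x
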